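/- arXiv:2002.00865 — 10 statements merged into one kernel-verified Lean document; each statement's English description precedes it below -/
import Mathlib

section
/- Let ω : [0,∞) → ℝ be strictly increasing and continuous, let J denote the range of ω, and let ρ : J → ℝ be strictly positive. Let φ, ψ : J → ℝ be differentiable functions satisfying φ'(ω(s)) = -s·ρ(ω(s)) and ψ'(ω(s)) = ρ(ω(s)) for all s ≥ 0. Then for every fixed r ≥ 0 and every s ≥ 0, φ(ω(s)) + r·ψ(ω(s)) ≤ φ(ω(r)) + r·ψ(ω(r)), with equality if and only if s = r. -/
/-!
For fixed `r`, the map `F z = φ z + r * ψ z` has derivative `(r - t) * ρ (ω t)` at `ω t`, which has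
the sign of `r - t`. By continuity of `ω`, every point strictly between `ω a` and `ω b` is some
`ω t` with `a < t < b`, so the mean value theorem expresses the increments of `F` between points of
the range of `ω` through this derivative (`exists_increment_eq`). Hence `F ∘ ω` strictly increases
up to `r` and strictly decreases after it.
-/

open Set

/-- Mean value theorem for `φ + r * ψ` along `ω`: the intermediate point is itself of the form
`ω t` with `t` strictly between the two parameters. -/
theorem exists_increment_eq {ω ρ φ ψ : ℝ → ℝ}
    (hω_mono : StrictMonoOn ω (Ici 0))
    (hω_cont : ContinuousOn ω (Ici 0))
    (hφ : ∀ s ∈ Ici (0 : ℝ), HasDerivAt φ (-s * ρ (ω s)) (ω s))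
    (hψ : ∀ s ∈ Ici (0 : ℝ), HasDerivAt ψ (ρ (ω s)) (ω s))
    (r : ℝ) {a b : ℝ} (ha : 0 ≤ a) (hab : a < b) :
    ∃ t ∈ Ioo a b, (φ (ω b) + r * ψ (ω b)) - (φ (ω a) + r * ψ (ω a)) =
      (r - t) * (ρ (ω t) * (ω b - ω a)) := by
  have hlt : ω a < ω b := hω_mono ha (ha.trans hab.le) hab
  have hc : ContinuousOn ω (Icc a b) := hω_cont.mono fun x hx => ha.trans hx.1
  have hd : ∀ t, 0 ≤ t →
      HasDerivAt (fun z => φ z + r * ψ z) (-t * ρ (ω t) + r * ρ (ω t)) (ω t) :=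
    fun t ht => (hφ t ht).add ((hψ t ht).const_mul r)
  have hF : ∀ z ∈ Icc (ω a) (ω b), DifferentiableAt ℝ (fun z => φ z + r * ψ z) z := by
    intro z hz
    obtain ⟨t, ht, rfl⟩ := intermediate_value_Icc hab.le hc hz
    exact (hd t (ha.trans ht.1)).differentiableAt
  obtain ⟨c, hcm, hc'⟩ := exists_deriv_eq_slope (fun z => φ z + r * ψ z) hlt
    (fun z hz => (hF z hz).continuousAt.continuousWithinAt)
    (fun z hz => (hF z (Ioo_subset_Icc_self hz)).differentiableWithinAt)
  obtain ⟨t, ht, rfl⟩ := intermediate_value_Ioo hab.le hc hcm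
  refine ⟨t, ht, ?_⟩
  rw [(hd t (ha.trans ht.1.le)).deriv, eq_div_iff (sub_pos.2 hlt).ne'] at hc'
  linarith

/-- Theorem 1 (first part): for the pair (φ, ψ) built from ω and ρ, for fixed r ≥ 0
the map D ↦ φ(D) + r·ψ(D) restricted to D = ω(s) ∈ J is maximized exactly at s = r. -/
theorem stmt_0 (ω ρ φ ψ : ℝ → ℝ)
    (hω_mono : StrictMonoOn ω (Ici 0))
    (hω_cont : ContinuousOn ω (Ici 0))
    (hρ : ∀ z ∈ ω '' Ici 0, 0 < ρ z)
    (hφ : ∀ s ∈ Ici (0 : ℝ), HasDerivAt φ (-s * ρ (ω s)) (ω s))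
    (hψ : ∀ s ∈ Ici (0 : ℝ), HasDerivAt ψ (ρ (ω s)) (ω s))
    (r : ℝ) (hr : 0 ≤ r) (s : ℝ) (hs : 0 ≤ s) :
    φ (ω s) + r * ψ (ω s) ≤ φ (ω r) + r * ψ (ω r) ∧
      (φ (ω s) + r * ψ (ω s) = φ (ω r) + r * ψ (ω r) ↔ s = r) := by
  have key : s ≠ r → φ (ω s) + r * ψ (ω s) < φ (ω r) + r * ψ (ω r) := by
    intro hne
    rcases lt_or_gt_of_ne hne with h | h
    · obtain ⟨t, ht, he⟩ := exists_increment_eq hω_mono hω_cont hφ hψ r hs h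
      have h1 := mul_pos (hρ _ ⟨t, hs.trans ht.1.le, rfl⟩) (sub_pos.2 (hω_mono hs hr h))
      have h2 := mul_pos (sub_pos.2 ht.2) h1
      linarith
    · obtain ⟨t, ht, he⟩ := exists_increment_eq hω_mono hω_cont hφ hψ r hr h
      have h1 := mul_pos (hρ _ ⟨t, hr.trans ht.1.le, rfl⟩) (sub_pos.2 (hω_mono hr hs h))
      have h2 := mul_neg_of_neg_of_pos (sub_neg.2 ht.1) h1
      linarith
  refine ⟨?_, fun h => by_contra fun hne => (key hne).ne h, fun h => by rw [h]⟩
  by_cases h : s = r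
  · rw [h]
  · exact (key h).le
end

section
/- Let ω : [0,∞) → ℝ be strictly increasing and continuous, let J denote the range of ω, and let ρ : J → ℝ be strictly positive. Let φ, ψ : J → ℝ be differentiable functions satisfying φ'(ω(s)) = -s·ρ(ω(s)) and ψ'(ω(s)) = ρ(ω(s)) for all s ≥ 0, and assume ψ(ω(1)) = 0. Then for every r ≥ 0, φ(ω(r)) + r·ψ(ω(r)) ≥ φ(ω(1)), with equality if and only if r = 1. -/
open Set

/-!
For fixed `r`, the function `G z = φ z + r * ψ z` satisfies `G' (ω s) = (r - s) * ρ (ω s)`, so on the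
range of `ω` it increases up to `ω r` and decreases afterwards. Hence `G (ω r) > G (ω 1)` for
`r ≠ 1`, and `G (ω 1) = φ (ω 1)` by the normalization of `ψ`. The comparison is the mean value
theorem between `ω 1` and `ω r`, the intermediate point being written as `ω s` by continuity of `ω`
(`exists_mean_value`).
-/

/-- The mean value theorem for `φ + r * ψ` between `ω a` and `ω b`, with the intermediate point
expressed as `ω s`. -/
lemma exists_mean_value {ω ρ φ ψ : ℝ → ℝ}
    (hω_mono : StrictMonoOn ω (Ici 0))
    (hω_cont : ContinuousOn ω (Ici 0))
    (hφ : ∀ s ∈ Ici (0 : ℝ), HasDerivAt φ (-s * ρ (ω s)) (ω s))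
    (hψ : ∀ s ∈ Ici (0 : ℝ), HasDerivAt ψ (ρ (ω s)) (ω s))
    (r : ℝ) {a b : ℝ} (ha : 0 ≤ a) (hab : a < b) :
    ∃ s ∈ Ioo a b, (φ (ω b) + r * ψ (ω b)) - (φ (ω a) + r * ψ (ω a)) =
      (r - s) * ρ (ω s) * (ω b - ω a) := by
  have hsub : Icc a b ⊆ Ici 0 := fun x hx => ha.trans hx.1
  have hlt : ω a < ω b := hω_mono ha (ha.trans hab.le) hab
  have hd : ∀ s ∈ Ici (0 : ℝ),
      HasDerivAt (fun z => φ z + r * ψ z) ((r - s) * ρ (ω s)) (ω s) := by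
    intro s hs
    exact ((hφ s hs).add ((hψ s hs).const_mul r)).congr_deriv (by ring)
  have hG : ∀ z ∈ Icc (ω a) (ω b),
      HasDerivAt (fun z => φ z + r * ψ z) (deriv (fun z => φ z + r * ψ z) z) z := by
    intro z hz
    obtain ⟨s, hs, rfl⟩ := intermediate_value_Icc hab.le (hω_cont.mono hsub) hz
    exact (hd s (hsub hs)).differentiableAt.hasDerivAt
  obtain ⟨c, hc, hc'⟩ := exists_hasDerivAt_eq_slope (fun z => φ z + r * ψ z) _ hlt
    (fun z hz => (hG z hz).continuousAt.continuousWithinAt)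
    (fun z hz => hG z (Ioo_subset_Icc_self hz))
  obtain ⟨s, hs, rfl⟩ := intermediate_value_Ioo hab.le (hω_cont.mono hsub) hc
  refine ⟨s, hs, ?_⟩
  rw [(hd s (hsub (Ioo_subset_Icc_self hs))).deriv, eq_div_iff (sub_pos.2 hlt).ne'] at hc'
  exact hc'.symm

/-- Theorem 1 (second part): with the normalization ψ(ω(1)) = 0, the maximal value
r ↦ φ(ω(r)) + r·ψ(ω(r)) is minimized over r ≥ 0 exactly at r = 1, with value φ(ω(1)). -/
theorem stmt_1 (ω ρ φ ψ : ℝ → ℝ)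
    (hω_mono : StrictMonoOn ω (Ici 0))
    (hω_cont : ContinuousOn ω (Ici 0))
    (hρ : ∀ z ∈ ω '' Ici 0, 0 < ρ z)
    (hφ : ∀ s ∈ Ici (0 : ℝ), HasDerivAt φ (-s * ρ (ω s)) (ω s))
    (hψ : ∀ s ∈ Ici (0 : ℝ), HasDerivAt ψ (ρ (ω s)) (ω s))
    (hnorm : ψ (ω 1) = 0)
    (r : ℝ) (hr : 0 ≤ r) :
    φ (ω 1) ≤ φ (ω r) + r * ψ (ω r) ∧
      (φ (ω r) + r * ψ (ω r) = φ (ω 1) ↔ r = 1) := by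
  have key : r ≠ 1 → φ (ω 1) < φ (ω r) + r * ψ (ω r) := by
    intro hne
    rcases lt_or_gt_of_ne hne with h | h
    · obtain ⟨s, hs, e⟩ := exists_mean_value hω_mono hω_cont hφ hψ r hr h
      have hs0 : 0 ≤ s := hr.trans hs.1.le
      have h1 := mul_pos (mul_pos (sub_pos.2 hs.1) (hρ _ ⟨s, hs0, rfl⟩))
        (sub_pos.2 (hω_mono hr (mem_Ici.2 zero_le_one) h))
      rw [hnorm] at e
      linarith
    · obtain ⟨s, hs, e⟩ := exists_mean_value hω_mono hω_cont hφ hψ r zero_le_one h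
      have hs0 : 0 ≤ s := zero_le_one.trans hs.1.le
      have h1 := mul_pos (mul_pos (sub_pos.2 hs.2) (hρ _ ⟨s, hs0, rfl⟩))
        (sub_pos.2 (hω_mono (mem_Ici.2 zero_le_one) hr h))
      rw [hnorm] at e
      linarith
  by_cases h : r = 1
  · subst h
    simp [hnorm]
  · exact ⟨(key h).le, fun e => absurd e (key h).ne', fun e => absurd e h⟩
end

section
/- Let ω : [0,∞) → ℝ be strictly increasing and differentiable, let J denote the range of ω, and let ρ : J → ℝ be strictly positive. Let φ, ψ : J → ℝ be differentiable functions satisfying φ'(ω(s)) = -s·ρ(ω(s)) and ψ'(ω(s)) = ρ(ω(s)) for all s ≥ 0. Then the function r ↦ φ(ω(r)) + r·ψ(ω(r)) is differentiable on (0,∞) and its derivative at every r > 0 equals ψ(ω(r)). -/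
open Set

/-- If ω is strictly increasing and differentiable on [0,∞), the function
r ↦ φ(ω(r)) + r·ψ(ω(r)) is differentiable on (0,∞) with derivative ψ(ω(r)). -/
theorem stmt_3 (ω ω' ρ φ ψ : ℝ → ℝ)
    (hω_mono : StrictMonoOn ω (Ici 0))
    (hω_diff : ∀ s ∈ Ici (0 : ℝ), HasDerivWithinAt ω (ω' s) (Ici 0) s)
    (hρ : ∀ z ∈ ω '' Ici 0, 0 < ρ z)
    (hφ : ∀ s ∈ Ici (0 : ℝ), HasDerivAt φ (-s * ρ (ω s)) (ω s))
    (hψ : ∀ s ∈ Ici (0 : ℝ), HasDerivAt ψ (ρ (ω s)) (ω s))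
    (r : ℝ) (hr : 0 < r) :
    HasDerivAt (fun t => φ (ω t) + t * ψ (ω t)) (ψ (ω r)) r := by
  have hω : HasDerivAt ω (ω' r) r := (hω_diff r hr.le).hasDerivAt (Ici_mem_nhds hr)
  have hφω := (hφ r hr.le).comp r hω
  have hψω := (hψ r hr.le).comp r hω
  -- The terms `-r ρ(ω r) ω'(r)` and `r ρ(ω r) ω'(r)` cancel, leaving `ψ (ω r)`.
  exact (hφω.add ((hasDerivAt_id r).mul hψω)).congr_deriv (by simp; ring)
end

section
/- Let (X, μ) be a probability space, let ω : [0,∞) → ℝ be strictly increasing and continuous with range J, let ρ : J → ℝ be strictly positive, and let φ, ψ : J → ℝ be differentiable with φ'(ω(s)) = -s·ρ(ω(s)) and ψ'(ω(s)) = ρ(ω(s)) for all s ≥ 0. Let r : X → [0,∞) be measurable with ∫ r dμ = 1, and let D : X → J be any measurable function taking values in J, with all the integrands below μ-integrable. Then ∫ [φ(D(x)) + r(x)·ψ(D(x))] dμ(x) ≤ ∫ [φ(ω(r(x))) + r(x)·ψ(ω(r(x)))] dμ(x), with equality if D(x) = ω(r(x)) for μ-almost every x. -/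
open Set MeasureTheory

/-!
The inequality holds pointwise. For fixed `a = r x`, the function `g z = φ z + a * ψ z` has derivative
`(a - s) * ρ (ω s)` at `z = ω s`. As `ρ > 0`, it increases on the part of `J` below `ω a` and
decreases on the part above, so `g` is maximal over `J` at `ω a` (`cost_le_cost_optimal`).
Integrating over `μ` gives the result.
-/

/-- The pointwise cost `z ↦ φ z + a * ψ z` is maximal over `J` at `ω a`. Continuity of `ω` makes every
point between `ω a` and `ω s` lie in `J`, where the derivative of the cost is known. -/
theorem cost_le_cost_optimal {ω ρ φ ψ : ℝ → ℝ}
    (hω_mono : StrictMonoOn ω (Ici 0))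
    (hω_cont : ContinuousOn ω (Ici 0))
    (hρ : ∀ z ∈ ω '' Ici 0, 0 < ρ z)
    (hφ : ∀ s ∈ Ici (0 : ℝ), HasDerivAt φ (-s * ρ (ω s)) (ω s))
    (hψ : ∀ s ∈ Ici (0 : ℝ), HasDerivAt ψ (ρ (ω s)) (ω s))
    {a s : ℝ} (ha : 0 ≤ a) (hs : 0 ≤ s) :
    φ (ω s) + a * ψ (ω s) ≤ φ (ω a) + a * ψ (ω a) := by
  have hderiv : ∀ t, 0 ≤ t →
      HasDerivAt (fun z => φ z + a * ψ z) ((a - t) * ρ (ω t)) (ω t) := fun t ht =>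
    ((hφ t ht).add ((hψ t ht).const_mul a)).congr_deriv (by ring)
  have hpos : ∀ t, 0 ≤ t → 0 < ρ (ω t) := fun t ht => hρ _ ⟨t, ht, rfl⟩
  have hsurj : ∀ u v, 0 ≤ u → u ≤ v → Icc (ω u) (ω v) ⊆ ω '' Icc u v := fun u v hu huv =>
    intermediate_value_Icc huv (hω_cont.mono fun _ ht => hu.trans ht.1)
  rcases le_total a s with has | hsa
  · have hle := hω_mono.monotoneOn ha hs has
    have hanti : AntitoneOn (fun z => φ z + a * ψ z) (Icc (ω a) (ω s)) := by
      refine antitoneOn_of_deriv_nonpos (convex_Icc _ _) ?_ ?_ ?_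
      · intro z hz
        obtain ⟨t, ht, rfl⟩ := hsurj a s ha has hz
        exact (hderiv t (ha.trans ht.1)).continuousAt.continuousWithinAt
      · intro z hz
        obtain ⟨t, ht, rfl⟩ := hsurj a s ha has (interior_subset hz)
        exact (hderiv t (ha.trans ht.1)).differentiableAt.differentiableWithinAt
      · intro z hz
        obtain ⟨t, ht, rfl⟩ := hsurj a s ha has (interior_subset hz)
        rw [(hderiv t (ha.trans ht.1)).deriv]
        exact mul_nonpos_of_nonpos_of_nonneg (sub_nonpos.2 ht.1) (hpos t (ha.trans ht.1)).le
    exact hanti (left_mem_Icc.2 hle) (right_mem_Icc.2 hle) hle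
  · have hle := hω_mono.monotoneOn hs ha hsa
    have hmono : MonotoneOn (fun z => φ z + a * ψ z) (Icc (ω s) (ω a)) := by
      refine monotoneOn_of_deriv_nonneg (convex_Icc _ _) ?_ ?_ ?_
      · intro z hz
        obtain ⟨t, ht, rfl⟩ := hsurj s a hs hsa hz
        exact (hderiv t (hs.trans ht.1)).continuousAt.continuousWithinAt
      · intro z hz
        obtain ⟨t, ht, rfl⟩ := hsurj s a hs hsa (interior_subset hz)
        exact (hderiv t (hs.trans ht.1)).differentiableAt.differentiableWithinAt
      · intro z hz
        obtain ⟨t, ht, rfl⟩ := hsurj s a hs hsa (interior_subset hz)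
        rw [(hderiv t (hs.trans ht.1)).deriv]
        exact mul_nonneg (sub_nonneg.2 ht.2) (hpos t (hs.trans ht.1)).le
    exact hmono (left_mem_Icc.2 hle) (right_mem_Icc.2 hle) hle

/-- Pointwise-optimal discriminator: for any likelihood ratio r and any discriminator D
taking values in J = ω([0,∞)), the cost is at most the cost of D = ω ∘ r,
with equality when D = ω ∘ r μ-a.e. -/
theorem stmt_4 {X : Type*} [MeasurableSpace X] (μ : Measure X) [IsProbabilityMeasure μ]
    (ω ρ φ ψ : ℝ → ℝ)
    (hω_mono : StrictMonoOn ω (Ici 0))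
    (hω_cont : ContinuousOn ω (Ici 0))
    (hρ : ∀ z ∈ ω '' Ici 0, 0 < ρ z)
    (hφ : ∀ s ∈ Ici (0 : ℝ), HasDerivAt φ (-s * ρ (ω s)) (ω s))
    (hψ : ∀ s ∈ Ici (0 : ℝ), HasDerivAt ψ (ρ (ω s)) (ω s))
    (r D : X → ℝ)
    (hr_meas : Measurable r) (hr_nonneg : ∀ x, 0 ≤ r x)
    (hr_one : ∫ x, r x ∂μ = 1)
    (hD_meas : Measurable D) (hD_mem : ∀ x, D x ∈ ω '' Ici 0)
    (hint1 : Integrable (fun x => φ (D x) + r x * ψ (D x)) μ)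
    (hint2 : Integrable (fun x => φ (ω (r x)) + r x * ψ (ω (r x))) μ) :
    (∫ x, (φ (D x) + r x * ψ (D x)) ∂μ) ≤
        ∫ x, (φ (ω (r x)) + r x * ψ (ω (r x))) ∂μ ∧
      ((∀ᵐ x ∂μ, D x = ω (r x)) →
        (∫ x, (φ (D x) + r x * ψ (D x)) ∂μ) =
          ∫ x, (φ (ω (r x)) + r x * ψ (ω (r x))) ∂μ) := by
  refine ⟨integral_mono hint1 hint2 fun x => ?_, fun h => integral_congr_ae ?_⟩
  · obtain ⟨s, hs, hsx⟩ := hD_mem x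
    simp only [← hsx]
    exact cost_le_cost_optimal hω_mono hω_cont hρ hφ hψ (hr_nonneg x) hs
  · filter_upwards [h] with x hx
    rw [hx]
end

section
/- Let (X, μ) be a probability space, let ω : [0,∞) → ℝ be strictly increasing and continuous with range J, let ρ : J → ℝ be strictly positive, and let φ, ψ : J → ℝ be differentiable with φ'(ω(s)) = -s·ρ(ω(s)) and ψ'(ω(s)) = ρ(ω(s)) for all s ≥ 0. Let r : X → [0,∞) be measurable with ∫ r dμ = 1 and with x ↦ φ(ω(r(x))) + r(x)·ψ(ω(r(x))) μ-integrable. Then ∫ [φ(ω(r(x))) + r(x)·ψ(ω(r(x)))] dμ(x) ≥ φ(ω(1)) + ψ(ω(1)), with equality if and only if r(x) = 1 for μ-almost every x. -/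
open Set MeasureTheory

/-!
Fix `t ≥ 0` and put `H z = φ z + t * ψ z`. The derivative relations give
`H' (ω s) = (t - s) * ρ (ω s)`, so on the interval `ω '' [0, ∞)` the function `H` increases strictly
up to `ω t` and decreases strictly afterwards: `ω t` is its unique maximizer
(`objective_lt_of_ne`). Taking `t = r x` and comparing with the value at `ω 1` yields the pointwise
bound `φ (ω 1) + r x * ψ (ω 1) ≤ φ (ω (r x)) + r x * ψ (ω (r x))`, strict unless `r x = 1`. The
left side integrates to `φ (ω 1) + ψ (ω 1)` because `∫ r = 1`, and a nonnegative function with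
zero integral vanishes almost everywhere.
-/

/-- For fixed `t ≥ 0`, the point `ω t` is the unique maximizer of `φ + t * ψ` over the range
of `ω` on `[0, ∞)`. -/
theorem objective_lt_of_ne {ω ρ φ ψ : ℝ → ℝ}
    (hω_mono : StrictMonoOn ω (Ici 0))
    (hω_cont : ContinuousOn ω (Ici 0))
    (hρ : ∀ z ∈ ω '' Ici 0, 0 < ρ z)
    (hφ : ∀ s ∈ Ici (0 : ℝ), HasDerivAt φ (-s * ρ (ω s)) (ω s))
    (hψ : ∀ s ∈ Ici (0 : ℝ), HasDerivAt ψ (ρ (ω s)) (ω s))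
    {a t : ℝ} (ha : 0 ≤ a) (ht : 0 ≤ t) (hat : a ≠ t) :
    φ (ω a) + t * ψ (ω a) < φ (ω t) + t * ψ (ω t) := by
  have hderiv : ∀ s, 0 ≤ s →
      HasDerivAt (fun z => φ z + t * ψ z) ((t - s) * ρ (ω s)) (ω s) := by
    intro s hs
    exact ((hφ s hs).add ((hψ s hs).const_mul t)).congr_deriv (by ring)
  have hpos : ∀ s, 0 ≤ s → 0 < ρ (ω s) := fun s hs => hρ _ ⟨s, hs, rfl⟩
  -- By the intermediate value theorem every point between two values of `ω` is a value of `ω`.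
  have hivt : ∀ u v : ℝ, 0 ≤ u → u ≤ v → ∀ z ∈ Icc (ω u) (ω v), ∃ s ∈ Icc u v, ω s = z :=
    fun u v hu huv => intermediate_value_Icc huv
      (hω_cont.mono fun s hs => hu.trans hs.1)
  have hcont : ∀ u v : ℝ, 0 ≤ u → u ≤ v →
      ContinuousOn (fun z => φ z + t * ψ z) (Icc (ω u) (ω v)) := by
    intro u v hu huv z hz
    obtain ⟨s, hs, rfl⟩ := hivt u v hu huv z hz
    exact (hderiv s (hu.trans hs.1)).continuousAt.continuousWithinAt
  rcases lt_or_gt_of_ne hat with h | h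
  · have hlt : ω a < ω t := hω_mono ha ht h
    refine strictMonoOn_of_deriv_pos (convex_Icc (ω a) (ω t)) (hcont a t ha h.le) ?_
      (left_mem_Icc.2 hlt.le) (right_mem_Icc.2 hlt.le) hlt
    intro z hz
    rw [interior_Icc] at hz
    obtain ⟨s, hs, rfl⟩ := hivt a t ha h.le z ⟨hz.1.le, hz.2.le⟩
    have hs0 : 0 ≤ s := ha.trans hs.1
    have hst : s < t := (hω_mono.lt_iff_lt hs0 ht).1 hz.2
    rw [(hderiv s hs0).deriv]
    exact mul_pos (sub_pos.2 hst) (hpos s hs0)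
  · have hlt : ω t < ω a := hω_mono ht ha h
    refine strictAntiOn_of_deriv_neg (convex_Icc (ω t) (ω a)) (hcont t a ht h.le) ?_
      (left_mem_Icc.2 hlt.le) (right_mem_Icc.2 hlt.le) hlt
    intro z hz
    rw [interior_Icc] at hz
    obtain ⟨s, hs, rfl⟩ := hivt t a ht h.le z ⟨hz.1.le, hz.2.le⟩
    have hs0 : 0 ≤ s := ht.trans hs.1
    have hst : t < s := (hω_mono.lt_iff_lt ht hs0).1 hz.1
    rw [(hderiv s hs0).deriv]
    exact mul_neg_of_neg_of_pos (sub_neg.2 hst) (hpos s hs0)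

/-- Outer minimization: for any likelihood ratio r with respect to μ, the maximal cost
∫ φ(ω(r)) + r·ψ(ω(r)) dμ is at least φ(ω(1)) + ψ(ω(1)), with equality iff r = 1 a.e. -/
theorem stmt_5 {X : Type*} [MeasurableSpace X] (μ : Measure X) [IsProbabilityMeasure μ]
    (ω ρ φ ψ : ℝ → ℝ)
    (hω_mono : StrictMonoOn ω (Ici 0))
    (hω_cont : ContinuousOn ω (Ici 0))
    (hρ : ∀ z ∈ ω '' Ici 0, 0 < ρ z)
    (hφ : ∀ s ∈ Ici (0 : ℝ), HasDerivAt φ (-s * ρ (ω s)) (ω s))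
    (hψ : ∀ s ∈ Ici (0 : ℝ), HasDerivAt ψ (ρ (ω s)) (ω s))
    (r : X → ℝ)
    (hr_meas : Measurable r) (hr_nonneg : ∀ x, 0 ≤ r x)
    (hr_one : ∫ x, r x ∂μ = 1)
    (hint : Integrable (fun x => φ (ω (r x)) + r x * ψ (ω (r x))) μ) :
    φ (ω 1) + ψ (ω 1) ≤ ∫ x, (φ (ω (r x)) + r x * ψ (ω (r x))) ∂μ ∧
      ((∫ x, (φ (ω (r x)) + r x * ψ (ω (r x))) ∂μ) = φ (ω 1) + ψ (ω 1) ↔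
        ∀ᵐ x ∂μ, r x = 1) := by
  have hlt : ∀ x, r x ≠ 1 →
      φ (ω 1) + r x * ψ (ω 1) < φ (ω (r x)) + r x * ψ (ω (r x)) := fun x hx =>
    objective_lt_of_ne hω_mono hω_cont hρ hφ hψ zero_le_one (hr_nonneg x) (Ne.symm hx)
  have hle : ∀ x, φ (ω 1) + r x * ψ (ω 1) ≤ φ (ω (r x)) + r x * ψ (ω (r x)) := by
    intro x
    by_cases hx : r x = 1
    · rw [hx]
    · exact (hlt x hx).le
  -- A non-integrable `r` would have Bochner integral `0`, not `1`.
  have hr_int : Integrable r μ := by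
    by_contra h
    rw [integral_undef h] at hr_one
    exact zero_ne_one hr_one
  have hlin_int : Integrable (fun x => φ (ω 1) + r x * ψ (ω 1)) μ :=
    (integrable_const _).add (hr_int.mul_const _)
  have hlin : ∫ x, (φ (ω 1) + r x * ψ (ω 1)) ∂μ = φ (ω 1) + ψ (ω 1) := by
    rw [integral_add (integrable_const _) (hr_int.mul_const _), integral_mul_const, hr_one]
    simp
  rw [← hlin]
  refine ⟨integral_mono hlin_int hint hle, fun heq => ?_, fun h => ?_⟩
  · have hae := (integral_eq_iff_of_ae_le hlin_int hint (Filter.Eventually.of_forall hle)).1 heq.symm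
    filter_upwards [hae] with x hx
    by_contra hne
    exact (hlt x hne).ne hx
  · refine integral_congr_ae ?_
    filter_upwards [h] with x hx
    rw [hx]
end

section
/- Let (X, μ) be a probability space, let ω : [0,∞) → ℝ be strictly increasing and continuous with range J, let ρ : J → ℝ be strictly positive, and let φ, ψ : J → ℝ be differentiable with φ'(ω(s)) = -s·ρ(ω(s)) and ψ'(ω(s)) = ρ(ω(s)) for all s ≥ 0. Then the constant function r ≡ 1 solves the min–max problem min over likelihood ratios r of max over discriminators D of ∫ [φ(D(x)) + r(x)·ψ(D(x))] dμ(x), in the following sense: (i) for every measurable r : X → [0,∞) with ∫ r dμ = 1 and every measurable D : X → J (with integrable integrands), ∫ [φ(ω(r(x))) + r(x)·ψ(ω(r(x)))] dμ ≥ ∫ [φ(D(x)) + r(x)·ψ(D(x))] dμ whenever D(x) = ω(r(x)) a.e. is replaced by a general D, and moreover ∫ [φ(ω(r(x))) + r(x)·ψ(ω(r(x)))] dμ ≥ φ(ω(1)) + ψ(ω(1)); (ii) for r ≡ 1, taking D ≡ ω(1) attains the value φ(ω(1)) + ψ(ω(1)). Hence the min–max value equals φ(ω(1)) + ψ(ω(1)).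 -/
/-!
For fixed `a ≥ 0` the function `z ↦ φ z + a * ψ z` has derivative `(a - t) * ρ (ω t)` at `z = ω t`,
so on the interval `ω '' Ici 0` it increases up to `ω a` and decreases afterwards
(`le_at_optimal_discriminator`). Taking `a = r x` and integrating shows that `D = ω ∘ r` is the best
response to `r`. Comparing it with the constant discriminator `ω 1`, whose payoff is
`φ (ω 1) + ψ (ω 1)` for every likelihood ratio because `∫ r = 1`, gives the lower bound.
-/

open Set MeasureTheory

/-- For a likelihood ratio value `a`, the pointwise payoff is maximal at `z = ω a`. -/
lemma le_at_optimal_discriminator (ω ρ φ ψ : ℝ → ℝ)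
    (hω_mono : StrictMonoOn ω (Ici 0))
    (hω_cont : ContinuousOn ω (Ici 0))
    (hρ : ∀ z ∈ ω '' Ici 0, 0 < ρ z)
    (hφ : ∀ s ∈ Ici (0 : ℝ), HasDerivAt φ (-s * ρ (ω s)) (ω s))
    (hψ : ∀ s ∈ Ici (0 : ℝ), HasDerivAt ψ (ρ (ω s)) (ω s))
    {a s : ℝ} (ha : 0 ≤ a) (hs : 0 ≤ s) :
    φ (ω s) + a * ψ (ω s) ≤ φ (ω a) + a * ψ (ω a) := by
  have hder : ∀ t, 0 ≤ t →
      HasDerivAt (fun z => φ z + a * ψ z) ((a - t) * ρ (ω t)) (ω t) := by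
    intro t ht
    have h := (hφ t ht).add ((hψ t ht).const_mul a)
    rwa [show -t * ρ (ω t) + a * ρ (ω t) = (a - t) * ρ (ω t) by ring] at h
  have hpos : ∀ t, 0 ≤ t → 0 < ρ (ω t) := fun t ht => hρ _ ⟨t, ht, rfl⟩
  -- By the intermediate value theorem, every point between `ω p` and `ω q` is a value of `ω`.
  have hsurj : ∀ p q, 0 ≤ p → p ≤ q → ∀ z ∈ Icc (ω p) (ω q), ∃ t ∈ Icc p q, ω t = z := by
    intro p q hp hpq z hz
    exact intermediate_value_Icc hpq
      (hω_cont.mono fun t ht => hp.trans ht.1) hz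
  rcases le_total s a with h | h
  · have hle : ω s ≤ ω a := hω_mono.monotoneOn hs ha h
    have hmono : MonotoneOn (fun z => φ z + a * ψ z) (Icc (ω s) (ω a)) := by
      apply monotoneOn_of_deriv_nonneg (convex_Icc _ _)
      · intro z hz
        obtain ⟨t, ht, rfl⟩ := hsurj s a hs h z hz
        exact (hder t (hs.trans ht.1)).continuousAt.continuousWithinAt
      · intro z hz
        obtain ⟨t, ht, rfl⟩ := hsurj s a hs h z (interior_subset hz)
        exact (hder t (hs.trans ht.1)).differentiableAt.differentiableWithinAt
      · intro z hz
        obtain ⟨t, ht, rfl⟩ := hsurj s a hs h z (interior_subset hz)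
        rw [(hder t (hs.trans ht.1)).deriv]
        exact mul_nonneg (sub_nonneg.2 ht.2) (hpos t (hs.trans ht.1)).le
    exact hmono (left_mem_Icc.2 hle) (right_mem_Icc.2 hle) hle
  · have hle : ω a ≤ ω s := hω_mono.monotoneOn ha hs h
    have hanti : AntitoneOn (fun z => φ z + a * ψ z) (Icc (ω a) (ω s)) := by
      apply antitoneOn_of_deriv_nonpos (convex_Icc _ _)
      · intro z hz
        obtain ⟨t, ht, rfl⟩ := hsurj a s ha h z hz
        exact (hder t (ha.trans ht.1)).continuousAt.continuousWithinAt
      · intro z hz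
        obtain ⟨t, ht, rfl⟩ := hsurj a s ha h z (interior_subset hz)
        exact (hder t (ha.trans ht.1)).differentiableAt.differentiableWithinAt
      · intro z hz
        obtain ⟨t, ht, rfl⟩ := hsurj a s ha h z (interior_subset hz)
        rw [(hder t (ha.trans ht.1)).deriv]
        exact mul_nonpos_of_nonpos_of_nonneg (sub_nonpos.2 ht.1) (hpos t (ha.trans ht.1)).le
    exact hanti (left_mem_Icc.2 hle) (right_mem_Icc.2 hle) hle

/-- Corollary 1: the constant likelihood ratio r ≡ 1 solves the min–max problem and the
min–max value equals φ(ω(1)) + ψ(ω(1)). -/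
theorem stmt_6 {X : Type*} [MeasurableSpace X] (μ : Measure X) [IsProbabilityMeasure μ]
    (ω ρ φ ψ : ℝ → ℝ)
    (hω_mono : StrictMonoOn ω (Ici 0))
    (hω_cont : ContinuousOn ω (Ici 0))
    (hρ : ∀ z ∈ ω '' Ici 0, 0 < ρ z)
    (hφ : ∀ s ∈ Ici (0 : ℝ), HasDerivAt φ (-s * ρ (ω s)) (ω s))
    (hψ : ∀ s ∈ Ici (0 : ℝ), HasDerivAt ψ (ρ (ω s)) (ω s)) :
    (∀ (r D : X → ℝ), Measurable r → (∀ x, 0 ≤ r x) → (∫ x, r x ∂μ) = 1 →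
      Measurable D → (∀ x, D x ∈ ω '' Ici 0) →
      Integrable (fun x => φ (D x) + r x * ψ (D x)) μ →
      Integrable (fun x => φ (ω (r x)) + r x * ψ (ω (r x))) μ →
      (∫ x, (φ (D x) + r x * ψ (D x)) ∂μ) ≤
          ∫ x, (φ (ω (r x)) + r x * ψ (ω (r x))) ∂μ ∧
        φ (ω 1) + ψ (ω 1) ≤ ∫ x, (φ (ω (r x)) + r x * ψ (ω (r x))) ∂μ) ∧
    (∫ _x, (φ (ω 1) + (1 : ℝ) * ψ (ω 1)) ∂μ) = φ (ω 1) + ψ (ω 1) := by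
  have key := @le_at_optimal_discriminator ω ρ φ ψ hω_mono hω_cont hρ hφ hψ
  refine ⟨?_, by simp⟩
  intro r D _ hr0 hr1 _ hD hDint hint
  refine ⟨?_, ?_⟩
  · refine integral_mono hDint hint fun x => ?_
    obtain ⟨s, hs, hsx⟩ := hD x
    have h := key (hr0 x) hs
    rwa [hsx] at h
  · -- A non-integrable `r` would have integral `0` rather than `1`.
    have hri : Integrable r μ := by
      by_contra h
      rw [integral_undef h] at hr1
      exact zero_ne_one hr1
    have hrψ : Integrable (fun x => r x * ψ (ω 1)) μ := hri.mul_const _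
    have hc : Integrable (fun _ : X => φ (ω 1)) μ := integrable_const _
    calc φ (ω 1) + ψ (ω 1) = ∫ x, (φ (ω 1) + r x * ψ (ω 1)) ∂μ := by
          rw [integral_add hc hrψ, integral_mul_const, hr1]
          simp
      _ ≤ _ := integral_mono (hc.add hrψ) hint fun x => key (hr0 x) zero_le_one
end

section
/- For all real numbers r > 0 and D > 0, -log(1 + D) - r·log(1 + 1/D) ≤ -log(1 + r) - r·log(1 + 1/r), with equality if and only if D = r. Moreover, for every r > 0, -log(1 + r) - r·log(1 + 1/r) + r·log 2 ≥ -log 2, with equality if and only if r = 1. -/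
/-!
Writing `F r D = -log (1 + D) - r * log (1 + 1/D)`, the strict inequality `F r D < F r r` for
`D ≠ r` follows from `log x ≤ x - 1` (`inner_lt`). The outer bound is the instance `D = 1` of the
same fact, since `F r 1 = -log 2 - r * log 2`.
-/

/-- Strict inner maximization. This is Gibbs' inequality for the distributions proportional to
`(1, r)` and `(1, D)`: apply `log x < x - 1` to `(1 + r) / (1 + D)` and `(1 + 1/r) / (1 + 1/D)`;
the two upper bounds, weighted by `1` and `r`, cancel. -/
lemma inner_lt {r D : ℝ} (hr : 0 < r) (hD : 0 < D) (hne : D ≠ r) :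
    -Real.log (1 + D) - r * Real.log (1 + 1 / D) <
      -Real.log (1 + r) - r * Real.log (1 + 1 / r) := by
  have hne₁ : (1 + r) / (1 + D) ≠ 1 := by
    intro h
    rw [div_eq_one_iff_eq (by positivity)] at h
    exact hne (by linarith)
  have h₁ := Real.log_lt_sub_one_of_pos (show 0 < (1 + r) / (1 + D) by positivity) hne₁
  have h₂ := Real.log_le_sub_one_of_pos (show 0 < (1 + 1 / r) / (1 + 1 / D) by positivity)
  rw [Real.log_div (by positivity) (by positivity)] at h₁ h₂
  have h₃ := mul_le_mul_of_nonneg_left h₂ hr.le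
  have cancel : ((1 + r) / (1 + D) - 1) + r * ((1 + 1 / r) / (1 + 1 / D) - 1) = 0 := by
    have : D + 1 ≠ 0 := by positivity
    field_simp
    ring
  linarith

/-- A3 GAN: inner maximization -log(1+D) - r·log(1+1/D) ≤ -log(1+r) - r·log(1+1/r)
with equality iff D = r, and outer minimization
-log(1+r) - r·log(1+1/r) + r·log 2 ≥ -log 2 with equality iff r = 1. -/
theorem stmt_11 (r D : ℝ) (hr : 0 < r) (hD : 0 < D) :
    (-Real.log (1 + D) - r * Real.log (1 + 1 / D) ≤
        -Real.log (1 + r) - r * Real.log (1 + 1 / r) ∧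
      (-Real.log (1 + D) - r * Real.log (1 + 1 / D) =
          -Real.log (1 + r) - r * Real.log (1 + 1 / r) ↔ D = r)) ∧
    (-Real.log 2 ≤ -Real.log (1 + r) - r * Real.log (1 + 1 / r) + r * Real.log 2 ∧
      (-Real.log (1 + r) - r * Real.log (1 + 1 / r) + r * Real.log 2 = -Real.log 2 ↔
        r = 1)) := by
  have key : ∀ E : ℝ, 0 < E →
      -Real.log (1 + E) - r * Real.log (1 + 1 / E) ≤
        -Real.log (1 + r) - r * Real.log (1 + 1 / r) ∧
      (-Real.log (1 + E) - r * Real.log (1 + 1 / E) =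
        -Real.log (1 + r) - r * Real.log (1 + 1 / r) ↔ E = r) := by
    intro E hE
    rcases eq_or_ne E r with rfl | hne
    · exact ⟨le_rfl, by simp⟩
    · have h := inner_lt hr hE hne
      exact ⟨h.le, fun h' => absurd h' h.ne, fun h' => absurd h' hne⟩
  refine ⟨key D hD, ?_⟩
  -- The outer minimization is the inner inequality at the constant discriminator `D = 1`.
  obtain ⟨hle, hiff⟩ := key 1 one_pos
  have h2 : (1 : ℝ) + 1 = 2 := by norm_num
  rw [div_one, h2] at hle hiff
  refine ⟨by linarith, fun h => (hiff.1 (by linarith)).symm, fun h => ?_⟩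
  have := hiff.2 h.symm
  linarith
end

section
/- For all real numbers r > 0 and D ∈ ℝ, -log(1 + exp(D)) - r·log(1 + exp(-D)) ≤ -log(1 + r) - r·log(1 + 1/r), with equality if and only if D = log r. -/
/-!
With `x = exp D`, the gap between the two sides is minus a relative entropy between Bernoulli laws
(scaled by `1 + r`), so this is Gibbs' inequality. Concretely, `log a ≤ a - 1` is applied to
`a = (1 + r) / (1 + x)` and, with weight `r`, to `a = (1 + 1/r) / (1 + 1/x)`; the upper bounds add
up to zero, and the first is strict unless `x = r`.
-/

/-- Strict form of the bound in the variable `x = exp D`. -/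
lemma gibbs_strict {r x : ℝ} (hr : 0 < r) (hx : 0 < x) (hne : x ≠ r) :
    -Real.log (1 + x) - r * Real.log (1 + 1 / x) <
      -Real.log (1 + r) - r * Real.log (1 + 1 / r) := by
  have h1 : Real.log ((1 + r) / (1 + x)) < (1 + r) / (1 + x) - 1 := by
    refine Real.log_lt_sub_one_of_pos (by positivity) fun h => hne ?_
    rw [div_eq_one_iff_eq (by positivity)] at h
    linarith
  have h2 : r * Real.log ((1 + 1 / r) / (1 + 1 / x)) ≤ r * ((1 + 1 / r) / (1 + 1 / x) - 1) :=
    mul_le_mul_of_nonneg_left (Real.log_le_sub_one_of_pos (by positivity)) hr.le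
  have h3 : (1 + r) / (1 + x) - 1 + r * ((1 + 1 / r) / (1 + 1 / x) - 1) = 0 := by
    have : 1 + x ≠ 0 := by positivity
    have e : (1 + 1 / r) / (1 + 1 / x) = (1 + r) * x / (r * (1 + x)) := by
      have : 1 + 1 / x ≠ 0 := by positivity
      rw [div_eq_div_iff this (by positivity)]
      field_simp
      ring
    rw [e]
    field_simp
    ring
  rw [Real.log_div (by positivity) (by positivity)] at h1 h2
  linarith

/-- B2 GAN inner maximization: -log(1+exp D) - r·log(1+exp(-D)) ≤
-log(1+r) - r·log(1+1/r), with equality iff D = log r. -/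
theorem stmt_16 (r D : ℝ) (hr : 0 < r) :
    -Real.log (1 + Real.exp D) - r * Real.log (1 + Real.exp (-D)) ≤
        -Real.log (1 + r) - r * Real.log (1 + 1 / r) ∧
      (-Real.log (1 + Real.exp D) - r * Real.log (1 + Real.exp (-D)) =
          -Real.log (1 + r) - r * Real.log (1 + 1 / r) ↔ D = Real.log r) := by
  rw [Real.exp_neg, ← one_div]
  by_cases h : D = Real.log r
  · simp [h, Real.exp_log hr]
  · have hlt := gibbs_strict hr (Real.exp_pos D) fun e => h (by rw [← e, Real.log_exp])
    exact ⟨hlt.le, fun e => absurd e hlt.ne, fun e => absurd e h⟩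
end

section
/- For every real number r > 0, -(1 + r)·log(1 + r) + r·log r + r·log 2 ≥ -log 2, with equality if and only if r = 1. -/
/-!
Up to the constant `-log 2`, the left-hand side is
`-(log ((1 + r) / 2) + r * log ((1 + r) / (2 * r)))`. Applying `log x ≤ x - 1` to both logarithms
bounds the bracket by `(r - 1) / 2 + (1 - r) / 2 = 0`, strictly unless `(1 + r) / 2 = 1`.
-/

/-- Cross-Entropy GAN outer minimization:
-(1+r)·log(1+r) + r·log r + r·log 2 ≥ -log 2, with equality iff r = 1. -/
theorem stmt_18 (r : ℝ) (hr : 0 < r) :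
    -Real.log 2 ≤ -(1 + r) * Real.log (1 + r) + r * Real.log r + r * Real.log 2 ∧
      (-(1 + r) * Real.log (1 + r) + r * Real.log r + r * Real.log 2 = -Real.log 2 ↔
        r = 1) := by
  have h1r : (1 + r) ≠ 0 := by positivity
  have e1 : Real.log ((1 + r) / 2) = Real.log (1 + r) - Real.log 2 :=
    Real.log_div h1r two_ne_zero
  have e2 : Real.log ((1 + r) / (2 * r)) = Real.log (1 + r) - (Real.log 2 + Real.log r) := by
    rw [Real.log_div h1r (by positivity), Real.log_mul two_ne_zero hr.ne']
  have b2 : r * Real.log ((1 + r) / (2 * r)) ≤ (1 - r) / 2 := by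
    have h := mul_le_mul_of_nonneg_left
      (Real.log_le_sub_one_of_pos (show 0 < (1 + r) / (2 * r) by positivity)) hr.le
    have e : r * ((1 + r) / (2 * r) - 1) = (1 - r) / 2 := by field_simp; ring
    linarith
  have b1 := Real.log_le_sub_one_of_pos (show 0 < (1 + r) / 2 by positivity)
  rw [e1] at b1
  rw [e2] at b2
  refine ⟨by linarith, fun h => ?_, ?_⟩
  · by_contra hne
    have s1 := Real.log_lt_sub_one_of_pos (show 0 < (1 + r) / 2 by positivity)
      (fun h1 => hne (by linarith))
    rw [e1] at s1
    linarith
  · rintro rfl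
    norm_num
    ring
end

section
/- For all real numbers r ≥ 0 and D ∈ (0,1), D + log(1 - D) + r·D ≤ r - log(1 + r), with equality if and only if D = r/(1 + r). Moreover, for every r ≥ 0, r/2 - log(1 + r) ≥ 1/2 - log 2, with equality if and only if r = 1. -/
/-!
Both parts are instances of `log x ≤ x - 1` for `x > 0`, with equality iff `x = 1`:
the inner maximization with `x = (1 - D) * (1 + r)`, and the outer minimization with
`x = (1 + r) / 2`.
-/

theorem log_eq_sub_one_iff_of_pos {x : ℝ} (hx : 0 < x) : Real.log x = x - 1 ↔ x = 1 := by
  refine ⟨fun h => ?_, fun h => by simp [h]⟩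
  by_contra hne
  exact (Real.log_lt_sub_one_of_pos hx hne).ne h

/-- C2 GAN (α = 0): inner maximization D + log(1-D) + r·D ≤ r - log(1+r) for D ∈ (0,1)
with equality iff D = r/(1+r), and outer minimization r/2 - log(1+r) ≥ 1/2 - log 2
with equality iff r = 1. -/
theorem stmt_19 (r D : ℝ) (hr : 0 ≤ r) (hD : D ∈ Set.Ioo (0 : ℝ) 1) :
    (D + Real.log (1 - D) + r * D ≤ r - Real.log (1 + r) ∧
      (D + Real.log (1 - D) + r * D = r - Real.log (1 + r) ↔ D = r / (1 + r))) ∧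
    (1 / 2 - Real.log 2 ≤ r / 2 - Real.log (1 + r) ∧
      (r / 2 - Real.log (1 + r) = 1 / 2 - Real.log 2 ↔ r = 1)) := by
  have h1D : 0 < 1 - D := sub_pos.mpr hD.2
  have h1r : 0 < 1 + r := by linarith
  have hx : 0 < (1 - D) * (1 + r) := mul_pos h1D h1r
  have hy : 0 < (1 + r) / 2 := by linarith
  have hle := Real.log_le_sub_one_of_pos hx
  have heq := log_eq_sub_one_iff_of_pos hx
  have hle' := Real.log_le_sub_one_of_pos hy
  have heq' := log_eq_sub_one_iff_of_pos hy
  rw [Real.log_mul h1D.ne' h1r.ne'] at hle heq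
  rw [Real.log_div h1r.ne' two_ne_zero] at hle' heq'
  refine ⟨⟨by linarith, ?_⟩, by linarith, ?_⟩
  · rw [eq_div_iff h1r.ne']
    constructor
    · intro h
      linarith [heq.mp (by linarith)]
    · intro h
      linarith [heq.mpr (by linarith)]
  · constructor
    · intro h
      linarith [heq'.mp (by linarith)]
    · intro h
      linarith [heq'.mpr (by linarith)]
end
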